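/- Let p1, q1, p2, q2 be pairwise distinct reals, X1, X2 ∈ S, with α_{12}(X1,X2) well defined and nonzero, and let (X1',X2') = R(p1,q1;p2,q2)(X1,X2). Then R is reversible: applying R with the roles of the two solitons exchanged returns the original pair, i.e., R(p2,q2;p1,q1)(X2',X1') = (X2,X1). -/

import Mathlib

open Matrix

/-- The space of real `m × n` matrices. -/
abbrev Mat (m n : ℕ) := Matrix (Fin m) (Fin n) ℝ

/-- `X` is a rank-one `K`-projection, i.e. `X ∈ S`. -/
def InS {m n : ℕ} (K : Matrix (Fin n) (Fin m) ℝ) (X : Mat m n) : Prop :=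
  X * K * X = X ∧ X.rank = 1

/-- `A(p,q,λ,X) = 1ₘ − ((p−q)/(λ−q)) X K`. -/
noncomputable def Amat {m n : ℕ} (K : Matrix (Fin n) (Fin m) ℝ) (p q lam : ℝ) (X : Mat m n) :
    Matrix (Fin m) (Fin m) ℝ :=
  1 - ((p - q) / (lam - q)) • (X * K)

/-- `Ã(p,q,λ,X) = 1ₙ − ((p−q)/(λ−q)) K X`. -/
noncomputable def Atil {m n : ℕ} (K : Matrix (Fin n) (Fin m) ℝ) (p q lam : ℝ) (X : Mat m n) :
    Matrix (Fin n) (Fin n) ℝ :=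
  1 - ((p - q) / (lam - q)) • (K * X)

/-- `B(p,q,λ,X) = 1ₘ + ((p−q)/(λ−p)) X K`. -/
noncomputable def Bmat {m n : ℕ} (K : Matrix (Fin n) (Fin m) ℝ) (p q lam : ℝ) (X : Mat m n) :
    Matrix (Fin m) (Fin m) ℝ :=
  1 + ((p - q) / (lam - p)) • (X * K)

/-- `B̃(p,q,λ,X) = 1ₙ + ((p−q)/(λ−p)) K X`. -/
noncomputable def Btil {m n : ℕ} (K : Matrix (Fin n) (Fin m) ℝ) (p q lam : ℝ) (X : Mat m n) :
    Matrix (Fin n) (Fin n) ℝ :=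
  1 + ((p - q) / (lam - p)) • (K * X)

/-- `α₁₂⁻¹ = 1 − ((p1−q1)(p2−q2))/((p2−p1)(q2−q1)) · tr(K X1 K X2)`. -/
noncomputable def adenom {m n : ℕ} (K : Matrix (Fin n) (Fin m) ℝ) (p1 q1 p2 q2 : ℝ)
    (X1 X2 : Mat m n) : ℝ :=
  1 - (p1 - q1) * (p2 - q2) / ((p2 - p1) * (q2 - q1)) * (K * X1 * K * X2).trace

/-- The Yang–Baxter map `R(p1,q1;p2,q2)`. -/
noncomputable def Rmap {m n : ℕ} (K : Matrix (Fin n) (Fin m) ℝ) (p1 q1 p2 q2 : ℝ)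
    (X : Mat m n × Mat m n) : Mat m n × Mat m n :=
  ((adenom K p1 q1 p2 q2 X.1 X.2)⁻¹ •
      ((1 - ((p2 - q2) / (p2 - p1)) • (X.2 * K)) * X.1 *
        (1 - ((p2 - q2) / (q1 - q2)) • (K * X.2))),
   (adenom K p1 q1 p2 q2 X.1 X.2)⁻¹ •
      ((1 - ((p1 - q1) / (q2 - q1)) • (X.1 * K)) * X.2 *
        (1 - ((p1 - q1) / (p1 - p2)) • (K * X.1))))

/-- Trace denominator of the first component of the map `T`:
`tr[A₂(p1,X2) X1 B̃₂(q1,X2) K]`. -/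
noncomputable def Tden1 {m n : ℕ} (K : Matrix (Fin n) (Fin m) ℝ) (p1 q1 p2 q2 : ℝ)
    (X1 X2 : Mat m n) : ℝ :=
  (Amat K p2 q2 p1 X2 * X1 * Btil K p2 q2 q1 X2 * K).trace

/-- Trace denominator of the second component of the map `T`:
`tr[A₁(p2,X1) X2 B̃₁(q2,X1) K]`. -/
noncomputable def Tden2 {m n : ℕ} (K : Matrix (Fin n) (Fin m) ℝ) (p1 q1 p2 q2 : ℝ)
    (X1 X2 : Mat m n) : ℝ :=
  (Amat K p1 q1 p2 X1 * X2 * Btil K p1 q1 q2 X1 * K).trace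

/-- The (non-Yang–Baxter) map `T(p1,q1;p2,q2)`. -/
noncomputable def Tmap {m n : ℕ} (K : Matrix (Fin n) (Fin m) ℝ) (p1 q1 p2 q2 : ℝ)
    (X : Mat m n × Mat m n) : Mat m n × Mat m n :=
  ((Tden1 K p1 q1 p2 q2 X.1 X.2)⁻¹ • (Amat K p2 q2 p1 X.2 * X.1 * Btil K p2 q2 q1 X.2),
   (Tden2 K p1 q1 p2 q2 X.1 X.2)⁻¹ • (Amat K p1 q1 p2 X.1 * X.2 * Btil K p1 q1 q2 X.1))

/-- Trace denominator of the first component of `T⁻¹`: `tr[B₂(q1,X2) X1 Ã₂(p1,X2) K]`. -/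
noncomputable def Tinvden1 {m n : ℕ} (K : Matrix (Fin n) (Fin m) ℝ) (p1 q1 p2 q2 : ℝ)
    (X1 X2 : Mat m n) : ℝ :=
  (Bmat K p2 q2 q1 X2 * X1 * Atil K p2 q2 p1 X2 * K).trace

/-- Trace denominator of the second component of `T⁻¹`: `tr[B₁(q2,X1) X2 Ã₁(p2,X1) K]`. -/
noncomputable def Tinvden2 {m n : ℕ} (K : Matrix (Fin n) (Fin m) ℝ) (p1 q1 p2 q2 : ℝ)
    (X1 X2 : Mat m n) : ℝ :=
  (Bmat K p1 q1 q2 X1 * X2 * Atil K p1 q1 p2 X1 * K).trace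

/-- The map `Tinv(p1,q1;p2,q2)`, the inverse of `T(p1,q1;p2,q2)`. -/
noncomputable def Tinvmap {m n : ℕ} (K : Matrix (Fin n) (Fin m) ℝ) (p1 q1 p2 q2 : ℝ)
    (X : Mat m n × Mat m n) : Mat m n × Mat m n :=
  ((Tinvden1 K p1 q1 p2 q2 X.1 X.2)⁻¹ • (Bmat K p2 q2 q1 X.2 * X.1 * Atil K p2 q2 p1 X.2),
   (Tinvden2 K p1 q1 p2 q2 X.1 X.2)⁻¹ • (Bmat K p1 q1 q2 X.1 * X.2 * Atil K p1 q1 p2 X.1))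

/-- Trace denominator of the first component of `R⁻¹`: `tr[A₂(q1,X2) X1 B̃₂(p1,X2) K]`. -/
noncomputable def Rinvden1 {m n : ℕ} (K : Matrix (Fin n) (Fin m) ℝ) (p1 q1 p2 q2 : ℝ)
    (X1 X2 : Mat m n) : ℝ :=
  (Amat K p2 q2 q1 X2 * X1 * Btil K p2 q2 p1 X2 * K).trace

/-- Trace denominator of the second component of `R⁻¹`: `tr[B₁(p2,X1) X2 Ã₁(q2,X1) K]`. -/
noncomputable def Rinvden2 {m n : ℕ} (K : Matrix (Fin n) (Fin m) ℝ) (p1 q1 p2 q2 : ℝ)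
    (X1 X2 : Mat m n) : ℝ :=
  (Bmat K p1 q1 p2 X1 * X2 * Atil K p1 q1 q2 X1 * K).trace

/-- The map `Rinv(p1,q1;p2,q2)`, the inverse of `R(p1,q1;p2,q2)`. -/
noncomputable def Rinvmap {m n : ℕ} (K : Matrix (Fin n) (Fin m) ℝ) (p1 q1 p2 q2 : ℝ)
    (X : Mat m n × Mat m n) : Mat m n × Mat m n :=
  ((Rinvden1 K p1 q1 p2 q2 X.1 X.2)⁻¹ • (Amat K p2 q2 q1 X.2 * X.1 * Btil K p2 q2 p1 X.2),
   (Rinvden2 K p1 q1 p2 q2 X.1 X.2)⁻¹ • (Bmat K p1 q1 p2 X.1 * X.2 * Atil K p1 q1 q2 X.1))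

/-- `R` acting on components 1 and 2 of a triple. -/
noncomputable def R12t {m n : ℕ} (K : Matrix (Fin n) (Fin m) ℝ) (p1 q1 p2 q2 : ℝ)
    (X : Mat m n × Mat m n × Mat m n) : Mat m n × Mat m n × Mat m n :=
  ((Rmap K p1 q1 p2 q2 (X.1, X.2.1)).1, (Rmap K p1 q1 p2 q2 (X.1, X.2.1)).2, X.2.2)

/-- `R` acting on components 1 and 3 of a triple. -/
noncomputable def R13t {m n : ℕ} (K : Matrix (Fin n) (Fin m) ℝ) (p1 q1 p3 q3 : ℝ)
    (X : Mat m n × Mat m n × Mat m n) : Mat m n × Mat m n × Mat m n :=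
  ((Rmap K p1 q1 p3 q3 (X.1, X.2.2)).1, X.2.1, (Rmap K p1 q1 p3 q3 (X.1, X.2.2)).2)

/-- `R` acting on components 2 and 3 of a triple. -/
noncomputable def R23t {m n : ℕ} (K : Matrix (Fin n) (Fin m) ℝ) (p2 q2 p3 q3 : ℝ)
    (X : Mat m n × Mat m n × Mat m n) : Mat m n × Mat m n × Mat m n :=
  (X.1, Rmap K p2 q2 p3 q3 (X.2.1, X.2.2))

/-- `T` acting on components 1 and 2 of a triple. -/
noncomputable def T12t {m n : ℕ} (K : Matrix (Fin n) (Fin m) ℝ) (p1 q1 p2 q2 : ℝ)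
    (X : Mat m n × Mat m n × Mat m n) : Mat m n × Mat m n × Mat m n :=
  ((Tmap K p1 q1 p2 q2 (X.1, X.2.1)).1, (Tmap K p1 q1 p2 q2 (X.1, X.2.1)).2, X.2.2)

/-- `T` acting on components 1 and 3 of a triple. -/
noncomputable def T13t {m n : ℕ} (K : Matrix (Fin n) (Fin m) ℝ) (p1 q1 p3 q3 : ℝ)
    (X : Mat m n × Mat m n × Mat m n) : Mat m n × Mat m n × Mat m n :=
  ((Tmap K p1 q1 p3 q3 (X.1, X.2.2)).1, X.2.1, (Tmap K p1 q1 p3 q3 (X.1, X.2.2)).2)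

/-- `T` acting on components 2 and 3 of a triple. -/
noncomputable def T23t {m n : ℕ} (K : Matrix (Fin n) (Fin m) ℝ) (p2 q2 p3 q3 : ℝ)
    (X : Mat m n × Mat m n × Mat m n) : Mat m n × Mat m n × Mat m n :=
  (X.1, Tmap K p2 q2 p3 q3 (X.2.1, X.2.2))

/-- `T⁻¹` acting on components 2 and 3 of a triple. -/
noncomputable def Tinv23t {m n : ℕ} (K : Matrix (Fin n) (Fin m) ℝ) (p2 q2 p3 q3 : ℝ)
    (X : Mat m n × Mat m n × Mat m n) : Mat m n × Mat m n × Mat m n :=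
  (X.1, Tinvmap K p2 q2 p3 q3 (X.2.1, X.2.2))

/-- `R⁻¹` acting on components 2 and 3 of a triple. -/
noncomputable def Rinv23t {m n : ℕ} (K : Matrix (Fin n) (Fin m) ℝ) (p2 q2 p3 q3 : ℝ)
    (X : Mat m n × Mat m n × Mat m n) : Mat m n × Mat m n × Mat m n :=
  (X.1, Rinvmap K p2 q2 p3 q3 (X.2.1, X.2.2))

/-!
Put `k = (p1 - q1) (p2 - q2) / ((p2 - p1) (q2 - q1))`, `τ = tr (K X1 K X2)` and `A = 1 - k τ`, so
that `A` is the reciprocal of `α₁₂`. For rank-one `K`-projections, `X1 K X2 K X1 = τ X1` and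
`X2 K X1 K X2 = τ X2`. With `s, t` the coefficients in the formula for `X2'` and `c, d` those in the
formula for `X1'`, these relations give `(1 - t X1' K) (1 - s X1 K) X2 = A X2`, which undoes the
left factor of `X2'`; transposition gives its analogue on the right, and exchanging the two
variables gives both for `X1'`. Since `tr (K X1' K X2') = τ`, the reversed map carries the same
normalization `A`, and the factors of `A` cancel.
-/

section RankOne

variable {m n R : Type*} [Fintype n]

theorem exists_eq_vecMulVec_of_rank_le_one [Field R] {X : Matrix m n R} (hX : X.rank ≤ 1) :
    ∃ u v, X = vecMulVec u v := by
  have := FiniteDimensional.span_of_finite R (Set.finite_range X.col)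
  rw [rank_eq_finrank_span_cols, finrank_le_one_iff] at hX
  obtain ⟨u, hu⟩ := hX
  choose v hv using fun j ↦ hu ⟨X.col j, Submodule.subset_span ⟨j, rfl⟩⟩
  refine ⟨u, v, ?_⟩
  ext i j
  simpa [vecMulVec_apply, mul_comm] using (congrFun (congrArg Subtype.val (hv j)) i).symm

variable [Fintype m]

theorem vecMulVec_mul_mul_vecMulVec [CommRing R] (u : m → R) (v : n → R) (M : Matrix n m R) :
    vecMulVec u v * M * vecMulVec u v = (M * vecMulVec u v).trace • vecMulVec u v := by
  rw [vecMulVec_mul, vecMulVec_mul_vecMulVec, mul_vecMulVec, trace_vecMulVec, vecMulVec_smul,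
    ← dotProduct_mulVec, dotProduct_comm]

theorem mul_mul_self_of_rank_le_one [Field R] {X : Matrix m n R} (hX : X.rank ≤ 1)
    (M : Matrix n m R) : X * M * X = (M * X).trace • X := by
  obtain ⟨u, v, rfl⟩ := exists_eq_vecMulVec_of_rank_le_one hX
  exact vecMulVec_mul_mul_vecMulVec u v M

end RankOne

theorem trace_mul_mul_self_of_isIdempotentElem {n R : Type*} [Fintype n] [CommRing R]
    {P : Matrix n n R} (hP : IsIdempotentElem P) (Q : Matrix n n R) :
    (P * Q * P).trace = (P * Q).trace := by
  rw [trace_mul_comm, ← Matrix.mul_assoc, hP.eq]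

/-- `X` and `Y` are `K`-projections compressing each other to the multiple `τ`, as two rank-one
projections do with `τ = tr (K X K Y)`. -/
structure IsProjectionPair {m n R : Type*} [Fintype m] [Fintype n] [CommRing R]
    (K : Matrix n m R) (τ : R) (X Y : Matrix m n R) : Prop where
  left_proj : X * K * X = X
  right_proj : Y * K * Y = Y
  left_sandwich : X * K * Y * K * X = τ • X
  right_sandwich : Y * K * X * K * Y = τ • Y

namespace IsProjectionPair

variable {m n R : Type*} [Fintype m] [Fintype n] [CommRing R] {K : Matrix n m R} {τ : R}
  {X Y : Matrix m n R}

theorem symm (h : IsProjectionPair K τ X Y) : IsProjectionPair K τ Y X :=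
  ⟨h.right_proj, h.left_proj, h.right_sandwich, h.left_sandwich⟩

theorem transpose (h : IsProjectionPair K τ X Y) : IsProjectionPair Kᵀ τ Xᵀ Yᵀ where
  left_proj := by simpa [Matrix.mul_assoc] using congrArg Matrix.transpose h.left_proj
  right_proj := by simpa [Matrix.mul_assoc] using congrArg Matrix.transpose h.right_proj
  left_sandwich := by simpa [Matrix.mul_assoc] using congrArg Matrix.transpose h.left_sandwich
  right_sandwich := by simpa [Matrix.mul_assoc] using congrArg Matrix.transpose h.right_sandwich

theorem isIdempotentElem (h : IsProjectionPair K τ X Y) : IsIdempotentElem (K * X) := by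
  rw [IsIdempotentElem, Matrix.mul_assoc, ← Matrix.mul_assoc X, h.left_proj]

theorem of_inS {m n : ℕ} {K : Matrix (Fin n) (Fin m) ℝ} {X Y : Mat m n} (hX : InS K X)
    (hY : InS K Y) : IsProjectionPair K (K * X * K * Y).trace X Y where
  left_proj := hX.1
  right_proj := hY.1
  left_sandwich := by
    rw [Matrix.mul_assoc (K * X) K Y, trace_mul_comm (K * X), ← Matrix.mul_assoc,
      ← mul_mul_self_of_rank_le_one hX.2.le]
    simp only [Matrix.mul_assoc]
  right_sandwich := by
    rw [← mul_mul_self_of_rank_le_one hY.2.le]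
    simp only [Matrix.mul_assoc]

end IsProjectionPair

/-- The relations among the coefficients of `Rmap`: `s, t` are those of its second component,
`c, d` those of its first, and `k` is the factor of the trace in `adenom`, a cross-ratio of the
parameters. -/
structure IsDressingCoeffs {R : Type*} [CommRing R] (k s t c d : R) : Prop where
  left_mul : s * c = k
  right_mul : t * d = k
  compl_mul : (1 - s) * (1 - t) = 1 - k
  compl_mul' : (1 - c) * (1 - d) = 1 - k

namespace IsDressingCoeffs

theorem of_ne {F : Type*} [Field F] {p1 q1 p2 q2 : F} (hp : p1 ≠ p2) (hq : q1 ≠ q2) :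
    IsDressingCoeffs ((p1 - q1) * (p2 - q2) / ((p2 - p1) * (q2 - q1)))
      ((p1 - q1) / (q2 - q1)) ((p1 - q1) / (p1 - p2))
      ((p2 - q2) / (p2 - p1)) ((p2 - q2) / (q1 - q2)) := by
  have := sub_ne_zero.mpr hp
  have := sub_ne_zero.mpr hp.symm
  have := sub_ne_zero.mpr hq
  have := sub_ne_zero.mpr hq.symm
  constructor <;> field_simp <;> ring

variable {R : Type*} [CommRing R] {k s t c d : R}

theorem symm (h : IsDressingCoeffs k s t c d) : IsDressingCoeffs k c d s t :=
  ⟨mul_comm s c ▸ h.left_mul, mul_comm t d ▸ h.right_mul, h.compl_mul', h.compl_mul⟩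

theorem transpose (h : IsDressingCoeffs k s t c d) : IsDressingCoeffs k t s d c :=
  ⟨h.right_mul, h.left_mul, mul_comm (1 - s) _ ▸ h.compl_mul, mul_comm (1 - c) _ ▸ h.compl_mul'⟩

theorem mul_one_sub_sub (h : IsDressingCoeffs k s t c d) (τ : R) :
    t * (1 - d - s * (1 - d * τ)) = -s * (1 - k * τ) := by
  linear_combination (s * τ - 1) * h.right_mul - h.compl_mul

theorem one_sub_sub_mul_one_sub_sub (h : IsDressingCoeffs k s t c d) (τ : R) :
    (1 - d - s * (1 - d * τ)) * (1 - c - t * (1 - c * τ)) = (1 - k * τ) ^ 2 := by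
  obtain ⟨hsc, htd, hst, hcd⟩ := h
  have coeff_zero : (1 - d - s) * (1 - c - t) = 1 := by
    linear_combination hsc + htd + hst + hcd
  -- Multiplying the relations `hst` and `hcd` computes `(s + t) * (c + d)`, hence `s * d + c * t`.
  have coeff_one : s * d * (1 - c - t) + c * t * (1 - d - s) = -2 * k := by
    linear_combination (t * d - 1 - d - t) * hsc + (k - 1 - s - c) * htd + (k - c - d) * hst
      - s * t * hcd
  have coeff_two : s * d * (c * t) = k ^ 2 := by
    linear_combination t * d * hsc + k * htd
  linear_combination coeff_zero + τ * coeff_one + τ ^ 2 * coeff_two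

end IsDressingCoeffs

/-- The two-sided dressing `(1 - s Y K) X (1 - t K Y)` of `X` by `Y`. Up to the normalization by
`adenom`, each component of `Rmap` is a dressing of one variable by the other. -/
def dressing {m n R : Type*} [Fintype m] [Fintype n] [DecidableEq m] [DecidableEq n] [CommRing R]
    (K : Matrix n m R) (s t : R) (Y X : Matrix m n R) : Matrix m n R :=
  (1 - s • (Y * K)) * X * (1 - t • (K * Y))

section Dressing

variable {m n R : Type*} [Fintype m] [Fintype n] [DecidableEq m] [DecidableEq n] [CommRing R]
  {K : Matrix n m R} {τ k s t c d : R} {X Y : Matrix m n R}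

theorem transpose_dressing (K : Matrix n m R) (s t : R) (Y X : Matrix m n R) :
    (dressing K s t Y X)ᵀ = dressing Kᵀ t s Yᵀ Xᵀ := by
  simp [dressing, Matrix.mul_assoc]

theorem dressing_smul (K : Matrix n m R) (s t a : R) (Y X : Matrix m n R) :
    dressing K s t Y (a • X) = a • dressing K s t Y X := by
  simp only [dressing, Matrix.mul_smul, Matrix.smul_mul]

theorem dressing_mul_mul_one_sub_mul (h : IsProjectionPair K τ X Y) (s c d : R) :
    dressing K c d Y X * K * ((1 - s • (X * K)) * Y) =
      (1 - d - s * (1 - d * τ)) • ((1 - c • (Y * K)) * (X * K * Y)) := by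
  have inner : X * (1 - d • (K * Y)) * K * ((1 - s • (X * K)) * Y) =
      (1 - d - s * (1 - d * τ)) • (X * K * Y) := by
    have hXKYKY : X * K * Y * K * Y = X * K * Y := by
      rw [Matrix.mul_assoc _ K, Matrix.mul_assoc (X * K), ← Matrix.mul_assoc Y, h.right_proj]
    simp only [Matrix.mul_sub, Matrix.sub_mul, Matrix.mul_smul, Matrix.smul_mul, Matrix.mul_one,
      Matrix.one_mul, ← Matrix.mul_assoc, h.left_proj, h.left_sandwich, hXKYKY]
    module
  rw [← Matrix.mul_smul (1 - _), ← inner, dressing]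
  simp only [Matrix.mul_assoc]

theorem trace_mul_dressing_mul_dressing (h : IsProjectionPair K τ X Y)
    (hc : IsDressingCoeffs k s t c d) (hτ : (K * X * K * Y).trace = τ) :
    (K * dressing K c d Y X * K * dressing K s t X Y).trace = (1 - k * τ) ^ 2 * τ := by
  have trace_XYX : (K * X * K * Y * K * X).trace = τ := by
    simpa only [Matrix.mul_assoc, ← hτ] using
      trace_mul_mul_self_of_isIdempotentElem h.isIdempotentElem (K * Y)
  have trace_YXY : (K * Y * K * X * K * Y).trace = τ := by
    rw [← hτ, Matrix.mul_assoc (K * X) K Y, trace_mul_comm (K * X)]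
    simpa only [Matrix.mul_assoc] using
      trace_mul_mul_self_of_isIdempotentElem h.symm.isIdempotentElem (K * X)
  have trace_YXYX : (K * Y * K * X * K * Y * K * X).trace = τ * τ := by
    have hYX := congrArg (fun Z ↦ (K * X * (K * Z)).trace) h.right_sandwich
    simp only [Matrix.mul_smul, trace_smul, ← Matrix.mul_assoc, hτ, smul_eq_mul] at hYX
    rw [← hYX, Matrix.mul_assoc _ K X, trace_mul_comm]
    simp only [Matrix.mul_assoc]
  calc (K * dressing K c d Y X * K * dressing K s t X Y).trace
      = (K * (dressing K c d Y X * K * ((1 - s • (X * K)) * Y)) * (1 - t • (K * X))).trace := by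
        simp only [dressing, Matrix.mul_assoc]
    _ = (1 - d - s * (1 - d * τ)) * (1 - c - t * (1 - c * τ)) * τ := by
        rw [dressing_mul_mul_one_sub_mul h]
        simp only [Matrix.mul_sub, Matrix.sub_mul, Matrix.mul_smul, Matrix.smul_mul,
          Matrix.mul_one, Matrix.one_mul, ← Matrix.mul_assoc, trace_sub, trace_smul, smul_eq_mul,
          hτ, trace_XYX, trace_YXY, trace_YXYX]
        ring
    _ = (1 - k * τ) ^ 2 * τ := by rw [hc.one_sub_sub_mul_one_sub_sub]

end Dressing

section Reversal

variable {m n F : Type*} [Fintype m] [Fintype n] [DecidableEq m] [DecidableEq n] [Field F]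
  {K : Matrix n m F} {τ k s t c d : F} {X Y : Matrix m n F}

theorem one_sub_dressing_mul_one_sub_mul (h : IsProjectionPair K τ X Y)
    (hc : IsDressingCoeffs k s t c d) (hA : 1 - k * τ ≠ 0) :
    (1 - t • ((1 - k * τ)⁻¹ • dressing K c d Y X * K)) * ((1 - s • (X * K)) * Y) =
      (1 - k * τ) • Y := by
  have mixed : t • ((1 - k * τ)⁻¹ • dressing K c d Y X * K) * ((1 - s • (X * K)) * Y) =
      -s • ((1 - c • (Y * K)) * (X * K * Y)) := by
    simp only [Matrix.smul_mul, dressing_mul_mul_one_sub_mul h, smul_smul]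
    rw [mul_right_comm, hc.mul_one_sub_sub, mul_inv_cancel_right₀ hA]
  have collapse : (1 - c • (Y * K)) * (X * K * Y) = X * K * Y - (c * τ) • Y := by
    rw [Matrix.sub_mul, Matrix.one_mul, Matrix.smul_mul, mul_smul, ← h.right_sandwich]
    simp only [Matrix.mul_assoc]
  rw [Matrix.sub_mul, Matrix.one_mul, mixed, collapse, Matrix.sub_mul, Matrix.one_mul,
    Matrix.smul_mul, ← hc.left_mul]
  module

theorem mul_one_sub_mul_one_sub_dressing (h : IsProjectionPair K τ X Y)
    (hc : IsDressingCoeffs k s t c d) (hA : 1 - k * τ ≠ 0) :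
    Y * (1 - t • (K * X)) * (1 - s • (K * ((1 - k * τ)⁻¹ • dressing K c d Y X))) =
      (1 - k * τ) • Y := by
  apply Matrix.transpose_injective
  simpa [transpose_dressing] using
    one_sub_dressing_mul_one_sub_mul h.transpose hc.transpose hA

theorem dressing_dressing_cancel (h : IsProjectionPair K τ X Y)
    (hc : IsDressingCoeffs k s t c d) (hA : 1 - k * τ ≠ 0) :
    (1 - k * τ)⁻¹ • dressing K t s ((1 - k * τ)⁻¹ • dressing K c d Y X)
      ((1 - k * τ)⁻¹ • dressing K s t X Y) = Y := by
  set A := 1 - k * τ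
  set X' := A⁻¹ • dressing K c d Y X
  have undo : dressing K t s X' (dressing K s t X Y) = A • A • Y :=
    calc dressing K t s X' (dressing K s t X Y)
        = (1 - t • (X' * K)) * ((1 - s • (X * K)) * Y) *
            ((1 - t • (K * X)) * (1 - s • (K * X'))) := by
          simp only [dressing, Matrix.mul_assoc]
      _ = A • (Y * (1 - t • (K * X)) * (1 - s • (K * X'))) := by
          rw [one_sub_dressing_mul_one_sub_mul h hc hA, Matrix.smul_mul, ← Matrix.mul_assoc]
      _ = A • A • Y := by rw [mul_one_sub_mul_one_sub_dressing h hc hA]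
  rw [dressing_smul, undo, inv_smul_smul₀ hA, inv_smul_smul₀ hA]

end Reversal

theorem adenom_Rmap {m n : ℕ} {K : Matrix (Fin n) (Fin m) ℝ} {p1 q1 p2 q2 : ℝ}
    (hp : p1 ≠ p2) (hq : q1 ≠ q2) {X1 X2 : Mat m n}
    (hX : IsProjectionPair K (K * X1 * K * X2).trace X1 X2)
    (ha : adenom K p1 q1 p2 q2 X1 X2 ≠ 0) :
    adenom K p2 q2 p1 q1 (Rmap K p1 q1 p2 q2 (X1, X2)).2 (Rmap K p1 q1 p2 q2 (X1, X2)).1 =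
      adenom K p1 q1 p2 q2 X1 X2 := by
  set X1' := (Rmap K p1 q1 p2 q2 (X1, X2)).1 with hX1'
  set X2' := (Rmap K p1 q1 p2 q2 (X1, X2)).2 with hX2'
  have trace_invariant : (K * X1' * K * X2').trace = (K * X1 * K * X2).trace := by
    have trace_dressing := trace_mul_dressing_mul_dressing hX (.of_ne hp hq) rfl
    simp only [dressing] at trace_dressing
    rw [← adenom] at trace_dressing
    simp only [hX1', hX2', Rmap, Matrix.mul_smul, Matrix.smul_mul, trace_smul, smul_eq_mul,
      trace_dressing]
    field_simp
  rw [adenom, adenom, Matrix.mul_assoc _ K, trace_mul_comm, ← Matrix.mul_assoc, trace_invariant,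
    mul_comm (p2 - q2), ← neg_sub p2 p1, ← neg_sub q2 q1, neg_mul_neg]

theorem Rmap_reversible_general {m n : ℕ} {K : Matrix (Fin n) (Fin m) ℝ} {p1 q1 p2 q2 : ℝ}
    (hp : p1 ≠ p2) (hq : q1 ≠ q2) {X1 X2 : Mat m n}
    (hX : IsProjectionPair K (K * X1 * K * X2).trace X1 X2)
    (ha : adenom K p1 q1 p2 q2 X1 X2 ≠ 0) :
    Rmap K p2 q2 p1 q1
        ((Rmap K p1 q1 p2 q2 (X1, X2)).2, (Rmap K p1 q1 p2 q2 (X1, X2)).1)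
      = (X2, X1) := by
  have hc := IsDressingCoeffs.of_ne hp hq
  rw [Rmap, adenom_Rmap hp hq hX ha]
  exact Prod.ext (dressing_dressing_cancel hX hc ha) (dressing_dressing_cancel hX.symm hc.symm ha)

/-- `R` is reversible: `R(p2,q2;p1,q1)(X2',X1') = (X2,X1)`. -/
theorem Rmap_reversible
    (m n : ℕ) (hm : 0 < m) (hn : 0 < n)
    (K : Matrix (Fin n) (Fin m) ℝ) (hK : K.rank = min n m)
    (p1 q1 p2 q2 : ℝ)
    (hdist : List.Pairwise (· ≠ ·) [p1, q1, p2, q2])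
    (X1 X2 : Mat m n) (hX1 : InS K X1) (hX2 : InS K X2)
    (ha : adenom K p1 q1 p2 q2 X1 X2 ≠ 0) :
    Rmap K p2 q2 p1 q1
        ((Rmap K p1 q1 p2 q2 (X1, X2)).2, (Rmap K p1 q1 p2 q2 (X1, X2)).1)
      = (X2, X1) := by
  obtain ⟨hp1, hq1, -⟩ := by simpa only [List.pairwise_cons] using hdist
  exact Rmap_reversible_general (hp1 p2 (by simp)) (hq1 q2 (by simp)) (.of_inS hX1 hX2) ha
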